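/- Let d = 1 and x, y ∈ ℤ with y ≠ 0, x ≠ 0 and x ≠ y. Set H∞ := (ρ_1(x) + ρ_1(y) - ρ_1(y - x)) / (2 ρ_1(y)) and C_1(x, y) := (ρ_1(y-x) + ρ_1(x) - ρ_1(y)) / (4aπγ_1) + aπ y² γ_1³ (ρ_1(y-x) - ρ_1(x) - ρ_1(y)) / ρ_1(y)² + 2aπ x y γ_1³ / ρ_1(y). Then, as λ → 0+, H∞/λ - (G_λ(x, y) G_λ(0, 0) - G_λ(0, x) G_λ(0, y)) / (λ (G_λ(0, 0)² - G_λ(0, y)²)) = C_1(x, y) √π / √λ + o(1/√λ). -/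

import Mathlib

open MeasureTheory Real Filter Topology Asymptotics

/-- Fourier symbol `φ(θ) = ∑_z a(z) cos(zθ)` of the random walk on `ℤ`. -/
noncomputable def phi1 (a : ℤ → ℝ) (θ : ℝ) : ℝ :=
  ∑' z : ℤ, a z * Real.cos ((z : ℝ) * θ)

/-- Transition probability `p(t;x,y) = (2π)⁻¹ ∫_{-π}^{π} e^{φ(θ)t} cos(θ(y-x)) dθ`. -/
noncomputable def p1 (a : ℤ → ℝ) (t : ℝ) (x y : ℤ) : ℝ :=
  (2 * π)⁻¹ * ∫ θ in (-π)..π, Real.exp (phi1 a θ * t) * Real.cos (θ * ((y : ℝ) - (x : ℝ)))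

/-- Laplace transform `G_λ(x,y) = ∫_0^∞ e^{-λt} p(t;x,y) dt`. -/
noncomputable def G1 (a : ℤ → ℝ) (lam : ℝ) (x y : ℤ) : ℝ :=
  ∫ t in Set.Ioi (0 : ℝ), Real.exp (-lam * t) * p1 a t x y

/-- `φ''(0) = -∑_z a(z) z²`. -/
noncomputable def phi1'' (a : ℤ → ℝ) : ℝ := -∑' z : ℤ, a z * (z : ℝ) ^ 2

/-- `γ₁ = 1/√(2π |φ''(0)|)`. -/
noncomputable def gam1 (a : ℤ → ℝ) : ℝ := 1 / Real.sqrt (2 * π * |phi1'' a|)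

/-- `ρ₁(r) = (a/(2π)) ∫_{-π}^{π} (cos(rθ) - 1)/φ(θ) dθ` for `r ≠ 0`, and `ρ₁(0) = 1`. -/
noncomputable def rho1 (a : ℤ → ℝ) (r : ℤ) : ℝ :=
  if r = 0 then 1 else
    (-(a 0) / (2 * π)) * ∫ θ in (-π)..π, (Real.cos ((r : ℝ) * θ) - 1) / phi1 a θ

/-- `γ̃₁(r) = (r²/(4π)) ∫_ℝ v² e^{φ''(0)v²/2} dv`. -/
noncomputable def gamTilde1 (a : ℤ → ℝ) (r : ℤ) : ℝ :=
  ((r : ℝ) ^ 2 / (4 * π)) * ∫ v : ℝ, v ^ 2 * Real.exp (phi1'' a * v ^ 2 / 2)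

/-- The constant `C₁(x,y)` from Theorem 1 of the paper (with `a = -a(0)`). -/
noncomputable def C1Const (a : ℤ → ℝ) (x y : ℤ) : ℝ :=
  (rho1 a (y - x) + rho1 a x - rho1 a y) / (4 * (-(a 0)) * π * gam1 a) +
    (-(a 0)) * π * (y : ℝ) ^ 2 * gam1 a ^ 3 *
      (rho1 a (y - x) - rho1 a x - rho1 a y) / (rho1 a y) ^ 2 +
    2 * (-(a 0)) * π * (x : ℝ) * (y : ℝ) * gam1 a ^ 3 / rho1 a y

theorem one_sub_cos_eq_sinc_sq (w : ℝ) :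
    1 - Real.cos w = w ^ 2 / 2 * Real.sinc (w / 2) ^ 2 := by
  rcases eq_or_ne w 0 with rfl | hw
  · simp
  · rw [Real.sinc_of_ne_zero (by positivity)]
    have h : Real.cos w = 1 - 2 * Real.sin (w / 2) ^ 2 := by
      rw [← Real.cos_sq_add_sin_sq (w / 2)]
      nth_rw 1 [show w = 2 * (w / 2) by ring]
      rw [Real.cos_two_mul]
      nlinarith [Real.cos_sq_add_sin_sq (w / 2)]
    rw [h]
    field_simp
    ring

section Symbol

variable {a : ℤ → ℝ}

theorem continuous_phi1 (hsum : HasSum a 0) : Continuous (phi1 a) := by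
  refine continuous_tsum (u := fun z => |a z|) (fun z => by fun_prop) hsum.summable.abs ?_
  intro z θ
  rw [norm_mul, Real.norm_eq_abs, Real.norm_eq_abs]
  exact mul_le_of_le_one_right (abs_nonneg _) (Real.abs_cos_le_one _)

theorem hasSum_one_sub_cos (hsum : HasSum a 0) (θ : ℝ) :
    HasSum (fun z : ℤ => a z * (1 - Real.cos (z * θ))) (-phi1 a θ) := by
  have h : Summable fun z : ℤ => a z * Real.cos (z * θ) := by
    refine Summable.of_norm_bounded (g := fun z => |a z|) hsum.summable.abs fun z => ?_
    rw [norm_mul, Real.norm_eq_abs, Real.norm_eq_abs]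
    exact mul_le_of_le_one_right (abs_nonneg _) (Real.abs_cos_le_one _)
  simpa [mul_sub, phi1] using hsum.sub h.hasSum

theorem mul_one_sub_cos_nonneg (hpos : ∀ z : ℤ, z ≠ 0 → 0 ≤ a z) (θ : ℝ) (z : ℤ) :
    0 ≤ a z * (1 - Real.cos (z * θ)) := by
  rcases eq_or_ne z 0 with rfl | hz
  · simp
  · exact mul_nonneg (hpos z hz) (sub_nonneg.2 (Real.cos_le_one _))

theorem phi1_nonpos (hpos : ∀ z : ℤ, z ≠ 0 → 0 ≤ a z) (hsum : HasSum a 0) (θ : ℝ) :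
    phi1 a θ ≤ 0 :=
  neg_nonneg.1 ((hasSum_one_sub_cos hsum θ).nonneg (mul_one_sub_cos_nonneg hpos θ))

theorem phi1_ne_zero (hpos : ∀ z : ℤ, z ≠ 0 → 0 ≤ a z) (hsum : HasSum a 0)
    (hirr : AddSubgroup.closure {z : ℤ | 0 < a z} = ⊤) {θ : ℝ}
    (hθ : θ ∈ Set.Icc (-π) π) (hθ0 : θ ≠ 0) : phi1 a θ ≠ 0 := by
  intro h
  have hs := hasSum_one_sub_cos hsum θ
  rw [h, neg_zero, hasSum_zero_iff_of_nonneg (mul_one_sub_cos_nonneg hpos θ)] at hs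
  have hmem : ∀ z ∈ AddSubgroup.closure {z : ℤ | 0 < a z}, ∃ n : ℤ, (n : ℝ) * (2 * π) = z * θ := by
    intro z hz
    induction hz using AddSubgroup.closure_induction with
    | mem z hz =>
      have h1 := congrFun hs z
      have hz' : a z ≠ 0 := ne_of_gt hz
      simp only [Pi.zero_apply, mul_eq_zero, hz', false_or] at h1
      exact (Real.cos_eq_one_iff _).1 (by linarith)
    | zero => exact ⟨0, by simp⟩
    | add u v _ _ hu hv =>
      obtain ⟨m, hm⟩ := hu
      obtain ⟨n, hn⟩ := hv
      exact ⟨m + n, by push_cast; linarith⟩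
    | neg u _ hu =>
      obtain ⟨m, hm⟩ := hu
      exact ⟨-m, by push_cast; linarith⟩
  obtain ⟨n, hn⟩ := hmem 1 (by rw [hirr]; trivial)
  have hpi := Real.pi_pos
  obtain ⟨h1, h2⟩ := hθ
  refine hθ0 ((Real.cos_eq_one_iff_of_lt_of_lt (by linarith) (by linarith)).1 ?_)
  exact (Real.cos_eq_one_iff _).2 ⟨n, by simpa using hn⟩

theorem phi1''_neg (hpos : ∀ z : ℤ, z ≠ 0 → 0 ≤ a z)
    (hvar : Summable fun z : ℤ => (z : ℝ) ^ 2 * a z)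
    (hirr : AddSubgroup.closure {z : ℤ | 0 < a z} = ⊤) : phi1'' a < 0 := by
  have hex : ∃ z : ℤ, z ≠ 0 ∧ 0 < a z := by
    by_contra! hcon
    have hle : AddSubgroup.closure {z : ℤ | 0 < a z} ≤ ⊥ := by
      rw [AddSubgroup.closure_le]
      intro z hz
      by_contra hz0
      exact absurd hz (not_lt.2 (hcon z (by simpa using hz0)))
    rw [hirr] at hle
    have : (1 : ℤ) ∈ (⊥ : AddSubgroup ℤ) := hle trivial
    simp at this
  obtain ⟨z, hz, haz⟩ := hex
  rw [phi1'', neg_lt_zero]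
  have hs : Summable fun z : ℤ => a z * (z : ℝ) ^ 2 := by simpa [mul_comm] using hvar
  refine hs.tsum_pos (fun w => ?_) z (by positivity)
  rcases eq_or_ne w 0 with rfl | hw
  · simp
  · exact mul_nonneg (hpos w hw) (sq_nonneg _)

/-- On `[-π, π]` the symbol is `-θ²` times a positive continuous function. -/
theorem exists_phi1_eq_neg_sq_mul (hpos : ∀ z : ℤ, z ≠ 0 → 0 ≤ a z) (hsum : HasSum a 0)
    (hvar : Summable fun z : ℤ => (z : ℝ) ^ 2 * a z)
    (hirr : AddSubgroup.closure {z : ℤ | 0 < a z} = ⊤) :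
    ∃ (q : ℝ → ℝ) (c : ℝ), Continuous q ∧ 0 < c ∧ (∀ θ, c ≤ q θ) ∧
      |phi1'' a| = 2 * q 0 ∧ ∀ θ ∈ Set.Icc (-π) π, phi1 a θ = -(θ ^ 2 * q θ) := by
  have hs : Summable fun z : ℤ => a z * (z : ℝ) ^ 2 := by simpa [mul_comm] using hvar
  set q : ℝ → ℝ := fun θ => ∑' z : ℤ, a z * (z : ℝ) ^ 2 / 2 * Real.sinc (z * θ / 2) ^ 2 with hq
  have hqc : Continuous q := by
    refine continuous_tsum (u := fun z : ℤ => |a z * (z : ℝ) ^ 2|) (fun z => ?_) hs.abs ?_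
    · have := Real.continuous_sinc
      fun_prop
    · intro z θ
      have h1 : |Real.sinc (z * θ / 2)| ^ 2 ≤ 1 :=
        pow_le_one₀ (abs_nonneg _) (Real.abs_sinc_le_one _)
      rw [norm_mul, norm_pow, norm_div, Real.norm_eq_abs, Real.norm_eq_abs, Real.norm_eq_abs,
        abs_two]
      nlinarith [abs_nonneg (a z * (z : ℝ) ^ 2)]
  have hphi (θ : ℝ) : phi1 a θ = -(θ ^ 2 * q θ) := by
    rw [eq_neg_iff_add_eq_zero, ← neg_inj, neg_add, neg_zero, ← sub_eq_add_neg, sub_eq_zero,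
      ← (hasSum_one_sub_cos hsum θ).tsum_eq, hq, ← tsum_mul_left]
    refine tsum_congr fun z => ?_
    rw [one_sub_cos_eq_sinc_sq]
    ring
  have hneg := phi1''_neg hpos hvar hirr
  have hq0 : |phi1'' a| = 2 * q 0 := by
    rw [abs_of_neg hneg, phi1'', neg_neg, hq, ← tsum_mul_left]
    refine tsum_congr fun z => ?_
    simp
    ring
  have hqpos : ∀ θ ∈ Set.Icc (-π) π, 0 < q θ := by
    intro θ hθ
    rcases eq_or_ne θ 0 with rfl | hθ0
    · linarith [abs_pos.2 hneg.ne]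
    · have h1 := (phi1_nonpos hpos hsum θ).lt_of_ne (phi1_ne_zero hpos hsum hirr hθ hθ0)
      rw [hphi, neg_lt_zero] at h1
      exact pos_of_mul_pos_right h1 (sq_nonneg θ)
  have hpi := Real.pi_pos
  obtain ⟨θ₀, hθ₀, hmin⟩ := isCompact_Icc.exists_isMinOn
    (Set.nonempty_Icc.2 (by linarith : -π ≤ π)) hqc.continuousOn
  have hmax : ∀ θ ∈ Set.Icc (-π) π, max (q θ) (q θ₀) = q θ := fun θ hθ => max_eq_left (hmin hθ)
  refine ⟨fun θ => max (q θ) (q θ₀), q θ₀, by fun_prop, hqpos θ₀ hθ₀,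
    fun θ => le_max_right _ _, ?_, fun θ hθ => ?_⟩
  · simp only [hmax 0 ⟨by linarith, hpi.le⟩, hq0]
  · simp only [hmax θ hθ, hphi]

/-- Fourier representation of the Green function. -/
theorem G1_eq_integral (hpos : ∀ z : ℤ, z ≠ 0 → 0 ≤ a z) (hsum : HasSum a 0) {lam : ℝ}
    (hlam : 0 < lam) (x y : ℤ) :
    G1 a lam x y = (2 * π)⁻¹ *
      ∫ θ in (-π)..π, Real.cos (θ * ((y : ℝ) - (x : ℝ))) / (lam - phi1 a θ) := by
  have hpi : -π ≤ π := by linarith [Real.pi_pos]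
  have hc := continuous_phi1 hsum
  have hn := phi1_nonpos hpos hsum
  simp only [G1, p1, intervalIntegral.integral_of_le hpi]
  simp_rw [mul_left_comm _ (2 * π)⁻¹ _]
  rw [integral_const_mul]
  congr 1
  simp_rw [← integral_const_mul]
  rw [integral_integral_swap]
  · refine integral_congr_ae (Eventually.of_forall fun θ => ?_)
    have hθ : phi1 a θ - lam < 0 := by linarith [hn θ]
    have h : ∀ t : ℝ, Real.exp (-lam * t) *
        (Real.exp (phi1 a θ * t) * Real.cos (θ * ((y : ℝ) - (x : ℝ)))) =
        Real.exp ((phi1 a θ - lam) * t) * Real.cos (θ * ((y : ℝ) - (x : ℝ))) := by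
      intro t
      rw [← mul_assoc, ← Real.exp_add]
      ring_nf
    simp only [h]
    rw [integral_mul_const, integral_exp_mul_Ioi hθ, mul_zero, Real.exp_zero, neg_div,
      ← div_neg, neg_sub]
    ring
  · have hb : Integrable (fun p : ℝ × ℝ => Real.exp (-lam * p.1) * (1 : ℝ))
        ((volume.restrict (Set.Ioi 0)).prod (volume.restrict (Set.Ioc (-π) π))) :=
      Integrable.mul_prod (exp_neg_integrableOn_Ioi 0 hlam) (integrable_const 1)
    refine hb.mono' (by apply Continuous.aestronglyMeasurable; fun_prop) ?_
    rw [Measure.prod_restrict]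
    refine (ae_restrict_iff' (measurableSet_Ioi.prod measurableSet_Ioc)).2
      (Eventually.of_forall fun p hp => ?_)
    have hp1 : 0 < p.1 := hp.1
    have h1 : Real.exp (phi1 a p.2 * p.1) ≤ 1 :=
      Real.exp_le_one_iff.2 (mul_nonpos_of_nonpos_of_nonneg (hn _) hp1.le)
    simp only [Function.uncurry, norm_mul, Real.norm_eq_abs, Real.abs_exp]
    gcongr
    exact mul_le_one₀ h1 (abs_nonneg _) (Real.abs_cos_le_one _)

end Symbol

theorem integral_inv_one_add_sq_mul {s : ℝ} (hs : 0 < s) :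
    ∫ u : ℝ, (1 + u ^ 2 * s)⁻¹ = π / √s := by
  have h := Measure.integral_comp_mul_left (fun u : ℝ => (1 + u ^ 2)⁻¹) (√s)
  rw [integral_univ_inv_one_add_sq, smul_eq_mul, abs_of_nonneg (by positivity)] at h
  rw [div_eq_inv_mul, ← h]
  congr with u
  rw [mul_pow, Real.sq_sqrt hs.le, mul_comm]

theorem integrable_inv_one_add_sq_mul {s : ℝ} (hs : 0 < s) :
    Integrable fun u : ℝ => (1 + u ^ 2 * s)⁻¹ := by
  have h := integrable_inv_one_add_sq.comp_mul_left' (Real.sqrt_pos.2 hs).ne'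
  refine h.congr (Eventually.of_forall fun u => ?_)
  simp only
  rw [mul_pow, Real.sq_sqrt hs.le, mul_comm]

/-- `ε / (ε² + θ² q(θ))` concentrates at `θ = 0` with mass `π / √q(0)`. -/
theorem tendsto_integral_mul_poisson {f q : ℝ → ℝ} {c : ℝ} (hf : Continuous f)
    (hq : Continuous q) (hc : 0 < c) (hcq : ∀ θ, c ≤ q θ) :
    Tendsto (fun ε : ℝ => ∫ θ in (-π)..π, f θ * (ε / (ε ^ 2 + θ ^ 2 * q θ))) (𝓝[>] 0)
      (𝓝 (f 0 * (π / √(q 0)))) := by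
  have hpi := Real.pi_pos
  obtain ⟨M, hM⟩ := isCompact_Icc.exists_bound_of_continuousOn (hf.continuousOn (s := Set.Icc (-π) π))
  have hM0 : 0 ≤ M := (norm_nonneg _).trans (hM 0 ⟨by linarith, hpi.le⟩)
  set F : ℝ → ℝ := (Set.Ioc (-π) π).indicator f with hF
  have hFm : Measurable F := hf.measurable.indicator measurableSet_Ioc
  have hFM (θ : ℝ) : ‖F θ‖ ≤ M := by
    by_cases h : θ ∈ Set.Ioc (-π) π
    · rw [hF, Set.indicator_of_mem h]
      exact hM θ ⟨h.1.le, h.2⟩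
    · rw [hF, Set.indicator_of_notMem h]
      simpa using hM0
  have hF0 : ContinuousAt F 0 := by
    refine hf.continuousAt.congr ?_
    filter_upwards [Ioo_mem_nhds (by linarith : -π < 0) hpi] with θ hθ
    exact (Set.indicator_of_mem (show θ ∈ Set.Ioc (-π) π from ⟨hθ.1, hθ.2.le⟩) f).symm
  have hF00 : F 0 = f 0 :=
    Set.indicator_of_mem (show (0 : ℝ) ∈ Set.Ioc (-π) π from ⟨by linarith, hpi.le⟩) f
  have hscale : ∀ᶠ ε : ℝ in 𝓝[>] 0,
      ∫ u : ℝ, F (ε * u) * (1 + u ^ 2 * q (ε * u))⁻¹ =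
        ∫ θ in (-π)..π, f θ * (ε / (ε ^ 2 + θ ^ 2 * q θ)) := by
    filter_upwards [self_mem_nhdsWithin] with ε hε
    have hε : 0 < ε := hε
    have h := Measure.integral_comp_mul_left (fun θ : ℝ => F θ * (ε ^ 2 / (ε ^ 2 + θ ^ 2 * q θ))) ε
    rw [smul_eq_mul, abs_of_pos (inv_pos.2 hε), ← integral_const_mul] at h
    rw [intervalIntegral.integral_of_le (by linarith), ← integral_indicator measurableSet_Ioc]
    refine Eq.trans (integral_congr_ae (Eventually.of_forall fun u => ?_))
      (h.trans (integral_congr_ae (Eventually.of_forall fun θ => ?_)))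
    · beta_reduce
      have : 0 < 1 + u ^ 2 * q (ε * u) :=
        add_pos_of_pos_of_nonneg one_pos (mul_nonneg (sq_nonneg _) (hc.le.trans (hcq _)))
      rw [mul_pow]
      congr 1
      rw [mul_assoc, ← mul_one_add, inv_eq_one_div, ← div_div, div_self (by positivity)]
    · beta_reduce
      by_cases hθ : θ ∈ Set.Ioc (-π) π
      · rw [hF, Set.indicator_of_mem hθ, Set.indicator_of_mem hθ]
        have : 0 < ε ^ 2 + θ ^ 2 * q θ :=
          add_pos_of_pos_of_nonneg (by positivity) (mul_nonneg (sq_nonneg _) (hc.le.trans (hcq _)))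
        field_simp
      · rw [hF, Set.indicator_of_notMem hθ, Set.indicator_of_notMem hθ]
        simp
  refine Tendsto.congr' hscale ?_
  rw [← integral_inv_one_add_sq_mul (hc.trans_le (hcq 0)), ← integral_const_mul]
  refine tendsto_integral_filter_of_dominated_convergence (fun u => M * (1 + u ^ 2 * c)⁻¹)
    (Eventually.of_forall fun ε => ?_) (Eventually.of_forall fun ε => Eventually.of_forall fun u => ?_)
    ((integrable_inv_one_add_sq_mul hc).const_mul M) (Eventually.of_forall fun u => ?_)
  · have hqm := hq.measurable
    exact Measurable.aestronglyMeasurable (by fun_prop)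
  · have h1 : 0 < 1 + u ^ 2 * c := by positivity
    have h2 : 1 + u ^ 2 * c ≤ 1 + u ^ 2 * q (ε * u) := by
      have := hcq (ε * u)
      gcongr
    rw [norm_mul, norm_inv, Real.norm_of_nonneg (h1.le.trans h2)]
    exact mul_le_mul (hFM _) (inv_anti₀ h1 h2) (inv_nonneg.2 (h1.le.trans h2)) hM0
  · have hlin : Tendsto (fun ε : ℝ => ε * u) (𝓝[>] 0) (𝓝 0) := by
      have : Tendsto (fun ε : ℝ => ε * u) (𝓝 0) (𝓝 (0 * u)) := tendsto_id.mul_const u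
      rw [zero_mul] at this
      exact this.mono_left nhdsWithin_le_nhds
    have h1 : 1 + u ^ 2 * q 0 ≠ 0 :=
      (add_pos_of_pos_of_nonneg one_pos (mul_nonneg (sq_nonneg _) (hc.le.trans (hcq _)))).ne'
    rw [← hF00]
    exact (hF0.tendsto.comp hlin).mul
      (((((hq.tendsto 0).comp hlin).const_mul _).const_add 1).inv₀ h1)

section Expansion

variable {a : ℤ → ℝ} {q : ℝ → ℝ} {c : ℝ}

theorem rho1_eq_integral (hneg : a 0 < 0) (hc : 0 < c) (hcq : ∀ θ, c ≤ q θ)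
    (hphi : ∀ θ ∈ Set.Icc (-π) π, phi1 a θ = -(θ ^ 2 * q θ)) {r : ℤ} (hr : r ≠ 0) :
    rho1 a r / -(a 0) = (2 * π)⁻¹ *
      ∫ θ in (-π)..π, (r : ℝ) ^ 2 / 2 * Real.sinc (r * θ / 2) ^ 2 / q θ := by
  have hpi := Real.pi_pos
  rw [rho1, if_neg hr]
  have h : ∫ θ in (-π)..π, (Real.cos ((r : ℝ) * θ) - 1) / phi1 a θ =
      ∫ θ in (-π)..π, (r : ℝ) ^ 2 / 2 * Real.sinc (r * θ / 2) ^ 2 / q θ := by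
    refine intervalIntegral.integral_congr_ae ?_
    filter_upwards [Measure.ae_ne volume (0 : ℝ)] with θ hθ0 hθ
    rw [Set.uIoc_of_le (by linarith)] at hθ
    have hq : q θ ≠ 0 := (hc.trans_le (hcq θ)).ne'
    rw [hphi θ ⟨hθ.1.le, hθ.2⟩, ← neg_sub, one_sub_cos_eq_sinc_sq, neg_div_neg_eq]
    field_simp
  rw [h]
  have := hneg.ne
  field_simp

theorem rho1_pos (hneg : a 0 < 0) (hq : Continuous q) (hc : 0 < c) (hcq : ∀ θ, c ≤ q θ)
    (hphi : ∀ θ ∈ Set.Icc (-π) π, phi1 a θ = -(θ ^ 2 * q θ)) {r : ℤ} (hr : r ≠ 0) :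
    0 < rho1 a r := by
  have hpi := Real.pi_pos
  have hqpos (θ : ℝ) : 0 < q θ := hc.trans_le (hcq θ)
  have hsinc := Real.continuous_sinc
  have h : 0 < rho1 a r / -(a 0) := by
    rw [rho1_eq_integral hneg hc hcq hphi hr]
    refine mul_pos (by positivity) (intervalIntegral.integral_pos (by linarith) ?_ ?_ ?_)
    · exact (Continuous.div (by fun_prop) hq fun θ => (hqpos θ).ne').continuousOn
    · intro θ _
      have := hqpos θ
      positivity
    · refine ⟨0, ⟨by linarith, hpi.le⟩, ?_⟩
      have := hqpos 0
      simp only [mul_zero, zero_div, Real.sinc_zero]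
      positivity
  exact (div_pos_iff_of_pos_right (neg_pos.2 hneg)).1 h

theorem tendsto_mul_G1 (hpos : ∀ z : ℤ, z ≠ 0 → 0 ≤ a z) (hsum : HasSum a 0)
    (hq : Continuous q) (hc : 0 < c) (hcq : ∀ θ, c ≤ q θ)
    (hphi : ∀ θ ∈ Set.Icc (-π) π, phi1 a θ = -(θ ^ 2 * q θ)) :
    Tendsto (fun ε : ℝ => ε * G1 a (ε ^ 2) 0 0) (𝓝[>] 0) (𝓝 (1 / (2 * √(q 0)))) := by
  have hpi := Real.pi_pos
  have h := (tendsto_integral_mul_poisson (f := fun _ => 1) continuous_const hq hc hcq).const_mul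
    (2 * π)⁻¹
  have hlim : (2 * π)⁻¹ * (1 * (π / √(q 0))) = 1 / (2 * √(q 0)) := by field_simp
  rw [hlim] at h
  refine h.congr' ?_
  filter_upwards [self_mem_nhdsWithin] with ε hε
  have hε : 0 < ε := hε
  rw [G1_eq_integral hpos hsum (by positivity), mul_left_comm]
  congr 1
  rw [← intervalIntegral.integral_const_mul]
  refine intervalIntegral.integral_congr fun θ hθ => ?_
  rw [Set.uIcc_of_le (by linarith)] at hθ
  simp only [hphi θ hθ]
  simp [div_eq_mul_inv]

theorem tendsto_rho1_sub_div (hpos : ∀ z : ℤ, z ≠ 0 → 0 ≤ a z) (hneg : a 0 < 0)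
    (hsum : HasSum a 0) (hq : Continuous q) (hc : 0 < c) (hcq : ∀ θ, c ≤ q θ)
    (hphi : ∀ θ ∈ Set.Icc (-π) π, phi1 a θ = -(θ ^ 2 * q θ)) {x y : ℤ} (hxy : x ≠ y) :
    Tendsto (fun ε : ℝ =>
        (rho1 a (y - x) / -(a 0) - (G1 a (ε ^ 2) 0 0 - G1 a (ε ^ 2) x y)) / ε)
      (𝓝[>] 0) (𝓝 (((y : ℝ) - x) ^ 2 / (4 * √(q 0) ^ 3))) := by
  have hpi := Real.pi_pos
  have hqpos (θ : ℝ) : 0 < q θ := hc.trans_le (hcq θ)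
  have hsinc := Real.continuous_sinc
  set g : ℝ → ℝ := fun θ =>
    ((y - x : ℤ) : ℝ) ^ 2 / 2 * Real.sinc ((y - x : ℤ) * θ / 2) ^ 2 / q θ with hg
  have hgc : Continuous g := Continuous.div (by fun_prop) hq fun θ => (hqpos θ).ne'
  have h := (tendsto_integral_mul_poisson hgc hq hc hcq).const_mul (2 * π)⁻¹
  have hlim : (2 * π)⁻¹ * (g 0 * (π / √(q 0))) = ((y : ℝ) - x) ^ 2 / (4 * √(q 0) ^ 3) := by
    have h0 := hqpos 0
    have h1 : q 0 = √(q 0) ^ 2 := (Real.sq_sqrt h0.le).symm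
    have h2 := Real.sqrt_pos.2 h0
    simp only [hg, mul_zero, zero_div, Real.sinc_zero]
    rw [h1, Real.sqrt_sq h2.le]
    push_cast
    field_simp
    ring
  rw [hlim] at h
  refine h.congr' ?_
  filter_upwards [self_mem_nhdsWithin] with ε hε
  have hε : 0 < ε := hε
  have hε2 : 0 < ε ^ 2 := by positivity
  have hden (θ : ℝ) : 0 < ε ^ 2 + θ ^ 2 * q θ :=
    add_pos_of_pos_of_nonneg hε2 (mul_nonneg (sq_nonneg _) (hqpos θ).le)
  have hcphi := continuous_phi1 hsum
  have hdphi (θ : ℝ) : ε ^ 2 - phi1 a θ ≠ 0 :=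
    (by linarith [phi1_nonpos hpos hsum θ] : 0 < ε ^ 2 - phi1 a θ).ne'
  have hG (u v : ℤ) : IntervalIntegrable
      (fun θ => Real.cos (θ * ((v : ℝ) - (u : ℝ))) / (ε ^ 2 - phi1 a θ)) volume (-π) π :=
    Continuous.intervalIntegrable (Continuous.div (by fun_prop) (by fun_prop) hdphi) _ _
  rw [rho1_eq_integral hneg hc hcq hphi (sub_ne_zero.2 hxy.symm),
    G1_eq_integral hpos hsum hε2, G1_eq_integral hpos hsum hε2, ← mul_sub, ← mul_sub,
    ← intervalIntegral.integral_sub (hG 0 0) (hG x y),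
    ← intervalIntegral.integral_sub (hgc.intervalIntegrable (-π) π) ((hG 0 0).sub (hG x y)),
    mul_div_assoc, ← intervalIntegral.integral_div]
  congr 1
  refine intervalIntegral.integral_congr fun θ hθ => ?_
  rw [Set.uIcc_of_le (by linarith)] at hθ
  have h1 := hden θ
  have h2 := hqpos θ
  have hcos : Real.cos (θ * ((y : ℝ) - x)) = 1 - q θ * g θ * θ ^ 2 := by
    have h3 := one_sub_cos_eq_sinc_sq (((y - x : ℤ) : ℝ) * θ)
    have h4 : q θ * g θ * θ ^ 2 = 1 - Real.cos (((y - x : ℤ) : ℝ) * θ) := by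
      rw [h3, hg]
      field_simp
    rw [h4]
    push_cast
    ring_nf
  simp only [hphi θ hθ, hcos, Int.cast_zero, sub_zero, mul_zero, Real.cos_zero, sub_neg_eq_add]
  field_simp
  ring

end Expansion

theorem gam1_eq {a : ℤ → ℝ} {s : ℝ} (hs : |phi1'' a| = 2 * s) :
    gam1 a = 1 / (2 * √π * √s) := by
  have hpi := Real.pi_pos
  rw [gam1, hs, show 2 * π * (2 * s) = 2 ^ 2 * (π * s) by ring,
    Real.sqrt_mul (by positivity), Real.sqrt_mul hpi.le, Real.sqrt_sq two_pos.le, mul_assoc]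

/-- The first order behaviour of the taboo quotient when `G₀ ~ u / ε` and the differences
`G₀ - Gᵢ` are `Rᵢ - dᵢ ε + o(ε)`. -/
theorem tendsto_taboo_quotient {G₀ Gx Gy Gz : ℝ → ℝ} {u Rx Ry Rz dx dy dz : ℝ} (hu : u ≠ 0)
    (hRy : Ry ≠ 0) (h₀ : Tendsto (fun ε => ε * G₀ ε) (𝓝[>] 0) (𝓝 u))
    (hx : Tendsto (fun ε => (Rx - (G₀ ε - Gx ε)) / ε) (𝓝[>] 0) (𝓝 dx))
    (hy : Tendsto (fun ε => (Ry - (G₀ ε - Gy ε)) / ε) (𝓝[>] 0) (𝓝 dy))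
    (hz : Tendsto (fun ε => (Rz - (G₀ ε - Gz ε)) / ε) (𝓝[>] 0) (𝓝 dz)) :
    Tendsto (fun ε => ((Rx + Ry - Rz) / (2 * Ry) -
        (Gz ε * G₀ ε - Gx ε * Gy ε) / (G₀ ε ^ 2 - Gy ε ^ 2)) / ε) (𝓝[>] 0)
      (𝓝 ((2 * u * (Ry * (dx + dy - dz) - (Rx + Ry - Rz) * dy) - (Rx + Ry - Rz) * Ry ^ 2 +
        2 * Ry * (Rx * Ry)) / (2 * Ry * Ry * (2 * u)))) := by
  have hε : Tendsto (fun ε : ℝ => ε) (𝓝[>] 0) (𝓝 0) := tendsto_nhdsWithin_of_tendsto_nhds tendsto_id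
  have hne : ∀ᶠ ε : ℝ in 𝓝[>] 0, ε ≠ 0 := by
    filter_upwards [self_mem_nhdsWithin] with ε h using ne_of_gt h
  have hD {G : ℝ → ℝ} {R d : ℝ}
      (h : Tendsto (fun ε => (R - (G₀ ε - G ε)) / ε) (𝓝[>] 0) (𝓝 d)) :
      Tendsto (fun ε => G₀ ε - G ε) (𝓝[>] 0) (𝓝 R) := by
    have h1 := (hε.mul h).const_sub R
    rw [zero_mul, sub_zero] at h1
    refine h1.congr' ?_
    filter_upwards [hne] with ε h
    field_simp
    ring
  have hden : Tendsto (fun ε => 2 * (ε * G₀ ε) - ε * (G₀ ε - Gy ε)) (𝓝[>] 0) (𝓝 (2 * u)) := by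
    simpa using (h₀.const_mul 2).sub (hε.mul (hD hy))
  have hlim := (((h₀.const_mul 2).mul ((((hx.add hy).sub hz).const_mul Ry).sub
    (hy.const_mul (Rx + Ry - Rz)))).sub (((hD hy).pow 2).const_mul (Rx + Ry - Rz))).add
    (((hD hx).mul (hD hy)).const_mul (2 * Ry))
  have hquot := hlim.div (((hD hy).const_mul (2 * Ry)).mul hden)
    (by simp [hu, hRy])
  refine hquot.congr' ?_
  filter_upwards [hne, (hD hy).eventually_ne hRy, hden.eventually_ne (mul_ne_zero two_ne_zero hu)]
    with ε h1 h2 h3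
  have h4 : G₀ ε ^ 2 - Gy ε ^ 2 = (G₀ ε - Gy ε) * (2 * (ε * G₀ ε) - ε * (G₀ ε - Gy ε)) / ε := by
    field_simp
    ring
  simp only [h4, Pi.div_apply]
  generalize hA : G₀ ε - Gy ε = A at *
  generalize hB : 2 * (ε * G₀ ε) - ε * A = B at *
  field_simp
  subst hB hA
  ring

/-- For `d = 1`, `x, y ≠ 0`, `x ≠ y`: with `H∞ = (ρ₁(x) + ρ₁(y) - ρ₁(y-x))/(2ρ₁(y))`,
as `λ → 0+`,
`H∞/λ - (G_λ(x,y)G_λ(0,0) - G_λ(0,x)G_λ(0,y))/(λ(G_λ(0,0)² - G_λ(0,y)²))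
  = C₁(x,y)√π/√λ + o(1/√λ)`. -/
theorem taboo_laplace_expansion_d1
    (a : ℤ → ℝ)
    (hpos : ∀ z : ℤ, z ≠ 0 → 0 ≤ a z)
    (hneg : a 0 < 0)
    (hsymm : ∀ z : ℤ, a (-z) = a z)
    (hsum : HasSum a 0)
    (hvar : Summable fun z : ℤ => (z : ℝ) ^ 2 * a z)
    (hirr : AddSubgroup.closure {z : ℤ | 0 < a z} = ⊤)
    (x y : ℤ) (hy : y ≠ 0) (hx : x ≠ 0) (hxy : x ≠ y) :
    (fun lam : ℝ =>
        (rho1 a x + rho1 a y - rho1 a (y - x)) / (2 * rho1 a y) / lam -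
          (G1 a lam x y * G1 a lam 0 0 - G1 a lam 0 x * G1 a lam 0 y) /
            (lam * ((G1 a lam 0 0) ^ 2 - (G1 a lam 0 y) ^ 2)) -
          C1Const a x y * Real.sqrt π / Real.sqrt lam)
      =o[𝓝[>] (0 : ℝ)] fun lam : ℝ => 1 / Real.sqrt lam := by
  have hpi := Real.pi_pos
  obtain ⟨q, c, hq, hc, hcq, hq0, hphi⟩ := exists_phi1_eq_neg_sq_mul hpos hsum hvar hirr
  have hqpos : 0 < q 0 := hc.trans_le (hcq 0)
  have hs : 0 < √(q 0) := Real.sqrt_pos.2 hqpos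
  have hp : 0 < √π := Real.sqrt_pos.2 hpi
  have hpp : π = √π ^ 2 := (Real.sq_sqrt hpi.le).symm
  have hρ := rho1_pos hneg hq hc hcq hphi hy
  have hA : 0 < -(a 0) := neg_pos.2 hneg
  have hX := tendsto_rho1_sub_div hpos hneg hsum hq hc hcq hphi hx.symm
  have hY := tendsto_rho1_sub_div hpos hneg hsum hq hc hcq hphi hy.symm
  have hZ := tendsto_rho1_sub_div hpos hneg hsum hq hc hcq hphi hxy
  simp only [sub_zero, Int.cast_zero] at hX hY
  have hmain := tendsto_taboo_quotient (by positivity) (div_pos hρ hA).ne'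
    (tendsto_mul_G1 hpos hsum hq hc hcq hphi) hX hY hZ
  have hsqrt : Tendsto Real.sqrt (𝓝[>] 0) (𝓝[>] 0) := by
    refine tendsto_nhdsWithin_iff.2 ⟨?_, ?_⟩
    · have := Real.continuous_sqrt.tendsto 0
      rw [Real.sqrt_zero] at this
      exact this.mono_left nhdsWithin_le_nhds
    · filter_upwards [self_mem_nhdsWithin] with lam hlam using Real.sqrt_pos.2 hlam
  have hcomp := (hmain.comp hsqrt).sub_const (C1Const a x y * √π)
  rw [isLittleO_iff_tendsto']
  · convert hcomp.congr' ?_ using 2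
    · rw [C1Const, gam1_eq hq0]
      generalize √(q 0) = s at *
      generalize -(a 0) = A at *
      generalize rho1 a x = X at *
      generalize rho1 a (y - x) = Z at *
      generalize rho1 a y = Y at *
      rw [hpp, Real.sqrt_sq hp.le]
      generalize √π = p at *
      field_simp
      ring
    · filter_upwards [self_mem_nhdsWithin] with lam hlam
      have hlam : 0 < lam := hlam
      have hl : 0 < √lam := Real.sqrt_pos.2 hlam
      have hll : √lam ^ 2 = lam := Real.sq_sqrt hlam.le
      have hH : (rho1 a x / -a 0 + rho1 a y / -a 0 - rho1 a (y - x) / -a 0) /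
          (2 * (rho1 a y / -a 0)) = (rho1 a x + rho1 a y - rho1 a (y - x)) / (2 * rho1 a y) := by
        rw [← add_div, ← sub_div, mul_div_assoc', div_div_div_cancel_right₀ hA.ne']
      simp only [Function.comp_apply, hH, hll]
      rw [div_mul_eq_div_div_swap _ lam]
      generalize (G1 a lam x y * G1 a lam 0 0 - G1 a lam 0 x * G1 a lam 0 y) /
        (G1 a lam 0 0 ^ 2 - G1 a lam 0 y ^ 2) = Q
      generalize (rho1 a x + rho1 a y - rho1 a (y - x)) / (2 * rho1 a y) = H
      rw [← hll, Real.sqrt_sq hl.le]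
      field_simp
  · filter_upwards [self_mem_nhdsWithin] with lam hlam h
    exact absurd h (one_div_pos.2 (Real.sqrt_pos.2 hlam)).ne'
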